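/- In the online Ramsey game with targets red C₄ and blue P₆, consider the position in which the five edges v₁v₂, v₂v₃, v₃v₄, v₄v₅, v₅v₆ of a path on six distinct vertices have been colored red, red, red, blue, blue respectively (case R4). From this position Builder can force a red copy of C₄ or a blue copy of P₆ within at most 6 additional rounds, so within at most 11 rounds in total. -/

import Mathlib

/-!
Suppose a blue path has ends `x` and `y` and is one vertex short of the blue target. Then every
edge from `x` or `y` to a vertex off the path must be colored red, so if a red path on three
vertices also joins `x` to `y`, the two edges from a fresh vertex to `x` and `y` close a red `C₄`.
Without such a red path, Builder first creates one with another fresh vertex, for two more rounds.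

For a red path `a b c d` continued by a blue path from `d` to `f`, Builder first plays `ad`, which
must be blue, and then `bf`. If `bf` is blue, the blue path from `a` to `b` is one vertex short.
If it is red, `b` is joined in red to `a`, `c` and `f`, and Builder plays `cf`. A blue `cf` gives
a blue path from `a` to `c`, and these two vertices have the common red neighbor `b`. A red `cf`
completes the red path `a b f c`, so `ac` must be blue, which gives a blue path from `c` to `f`;
these, too, have the common red neighbor `b`.
-/

open SimpleGraph

/-- The set `S` of edges of the infinite complete graph on `ℕ` contains a copy of
the graph `G`: there is an injective map of the vertices of `G` into `ℕ` sending
every edge of `G` into `S`. -/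
def HasCopy {V : Type*} (G : SimpleGraph V) (S : Set (Sym2 ℕ)) : Prop :=
  ∃ f : V → ℕ, Function.Injective f ∧ ∀ a b, G.Adj a b → s(f a, f b) ∈ S

/-- `BuilderWinsIn G H R B r` means: in the online Ramsey game with targets a red copy
of `G` and a blue copy of `H`, from the position in which the edges in `R` have been
colored red and the edges in `B` have been colored blue, Builder has a strategy that
guarantees, against every Painter strategy, that within at most `r` further rounds the
colored edges contain a red copy of `G` or a blue copy of `H`.  (In each round Builder
chooses a previously unchosen non-loop edge of the infinite complete graph on `ℕ`, and
Painter immediately colors it red or blue; so Builder wins within `r + 1` rounds iff he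
has already won, or he can choose an edge such that whichever color Painter gives it,
he can win within `r` further rounds.) -/
def BuilderWinsIn {V W : Type*} (G : SimpleGraph V) (H : SimpleGraph W) :
    Set (Sym2 ℕ) → Set (Sym2 ℕ) → ℕ → Prop
  | R, B, 0 => HasCopy G R ∨ HasCopy H B
  | R, B, (r + 1) => HasCopy G R ∨ HasCopy H B ∨
      ∃ e : Sym2 ℕ, ¬ e.IsDiag ∧ e ∉ R ∧ e ∉ B ∧
        BuilderWinsIn G H (insert e R) B r ∧ BuilderWinsIn G H R (insert e B) r

/-- The online size Ramsey number `ř(G, H)`: the least `t` such that, starting from the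
empty position, Builder can force a red copy of `G` or a blue copy of `H` within at
most `t` rounds. -/
noncomputable def onlineRamsey {V W : Type*} (G : SimpleGraph V) (H : SimpleGraph W) : ℕ :=
  sInf {t | BuilderWinsIn G H ∅ ∅ t}

/-- The edge set `S` contains a path from `x` to `y` whose vertices, in order, are `l`. This
describes monochromatic paths of a position; `l` gives both the number of vertices and those to
avoid when the path is extended. -/
def HasPathOn (S : Set (Sym2 ℕ)) (x y : ℕ) (l : List ℕ) : Prop :=
  ∃ p : (fromEdgeSet S).Walk x y, p.IsPath ∧ p.support = l

theorem adj_fromEdgeSet_insert {S : Set (Sym2 ℕ)} {x y : ℕ} (h : x ≠ y) :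
    (fromEdgeSet (insert s(x, y) S)).Adj x y :=
  (fromEdgeSet_adj _).mpr ⟨Set.mem_insert _ _, h⟩

theorem HasCopy.of_isContained {V : Type*} {G : SimpleGraph V} {S : Set (Sym2 ℕ)}
    (h : G ⊑ fromEdgeSet S) : HasCopy G S :=
  let ⟨f⟩ := h
  ⟨f, f.injective, fun _ _ hab => ((fromEdgeSet_adj _).mp (f.toHom.map_adj hab)).1⟩

namespace HasPathOn

variable {S : Set (Sym2 ℕ)} {x y u : ℕ} {l : List ℕ}

theorem singleton (S : Set (Sym2 ℕ)) (x : ℕ) : HasPathOn S x x [x] :=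
  ⟨.nil, .nil, rfl⟩

theorem left_mem (h : HasPathOn S x y l) : x ∈ l := by
  obtain ⟨p, -, rfl⟩ := h
  exact p.start_mem_support

theorem right_mem (h : HasPathOn S x y l) : y ∈ l := by
  obtain ⟨p, -, rfl⟩ := h
  exact p.end_mem_support

theorem ne (h : HasPathOn S x y l) (hl : 2 ≤ l.length) : x ≠ y := by
  rintro rfl
  obtain ⟨p, hp, rfl⟩ := h
  rw [p.length_support, (Walk.isPath_iff_nil.mp hp).length_eq_zero] at hl
  omega

theorem symm (h : HasPathOn S x y l) : HasPathOn S y x l.reverse := by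
  obtain ⟨p, hp, rfl⟩ := h
  exact ⟨p.reverse, hp.reverse, p.support_reverse⟩

theorem cons (h : HasPathOn S x y l) (hux : (fromEdgeSet S).Adj u x) (hu : u ∉ l) :
    HasPathOn S u y (u :: l) := by
  obtain ⟨p, hp, rfl⟩ := h
  exact ⟨.cons hux p, hp.cons hu, p.support_cons hux⟩

theorem mono {T : Set (Sym2 ℕ)} (h : HasPathOn S x y l) (hST : S ⊆ T) : HasPathOn T x y l := by
  obtain ⟨p, hp, rfl⟩ := h
  have hle := fromEdgeSet_mono hST
  exact ⟨p.mapLe hle, hp.mapLe hle, p.support_mapLe_eq_support hle⟩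

theorem insert_cons (h : HasPathOn S x y l) (hu : u ∉ l) :
    HasPathOn (insert s(u, x) S) u y (u :: l) :=
  have hux : u ≠ x := (ne_of_mem_of_not_mem h.left_mem hu).symm
  (h.mono (Set.subset_insert _ _)).cons (adj_fromEdgeSet_insert hux) hu

theorem insert_concat (h : HasPathOn S x y l) (hu : u ∉ l) :
    HasPathOn (insert s(u, y) S) x u (l ++ [u]) := by
  simpa using (h.symm.insert_cons (mt List.mem_reverse.mp hu)).symm

theorem of_adj_of_adj (hux : (fromEdgeSet S).Adj u x) (huy : (fromEdgeSet S).Adj u y)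
    (hxy : x ≠ y) : HasPathOn S x y [x, u, y] :=
  ((singleton S y).cons huy (by simpa using huy.ne)).cons hux.symm (by simp [hux.ne', hxy])

theorem hasCopy_pathGraph (h : HasPathOn S x y l) : HasCopy (pathGraph l.length) S := by
  obtain ⟨p, hp, rfl⟩ := h
  rw [p.length_support]
  exact .of_isContained hp.isContained_pathGraph

theorem hasCopy_cycleGraph (h : HasPathOn S x y l) (hl : 3 ≤ l.length)
    (hyx : (fromEdgeSet S).Adj y x) : HasCopy (cycleGraph l.length) S := by
  obtain ⟨p, hp, rfl⟩ := h
  rw [p.length_support] at hl ⊢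
  refine .of_isContained ((cycleGraph_isContained_iff hl).mpr ⟨y, .cons hyx p, ?_, rfl⟩)
  exact Walk.isCycle_iff_isPath_tail_and_le_length.mpr ⟨by simpa using hp, hl⟩

end HasPathOn

namespace BuilderWinsIn

section AnyTargets

variable {V W : Type*} {G : SimpleGraph V} {H : SimpleGraph W} {R B : Set (Sym2 ℕ)} {r : ℕ}

theorem of_hasCopy_red (h : HasCopy G R) : BuilderWinsIn G H R B r := by
  cases r <;> exact .inl h

theorem of_hasCopy_blue (h : HasCopy H B) : BuilderWinsIn G H R B r := by
  cases r
  exacts [.inr h, .inr (.inl h)]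

theorem succ : ∀ {r : ℕ} {R B : Set (Sym2 ℕ)},
    BuilderWinsIn G H R B r → BuilderWinsIn G H R B (r + 1)
  | 0, _, _, .inl h => .inl h
  | 0, _, _, .inr h => .inr (.inl h)
  | _ + 1, _, _, .inl h => .inl h
  | _ + 1, _, _, .inr (.inl h) => .inr (.inl h)
  | _ + 1, _, _, .inr (.inr ⟨e, he, heR, heB, hred, hblue⟩) =>
    .inr (.inr ⟨e, he, heR, heB, hred.succ, hblue.succ⟩)

-- Freshness of the edge is not required: an already colored edge costs no round.
theorem of_query {x y : ℕ} (hxy : x ≠ y) (hred : BuilderWinsIn G H (insert s(x, y) R) B r)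
    (hblue : BuilderWinsIn G H R (insert s(x, y) B) r) : BuilderWinsIn G H R B (r + 1) := by
  by_cases hR : s(x, y) ∈ R
  · exact (Set.insert_eq_of_mem hR ▸ hred).succ
  by_cases hB : s(x, y) ∈ B
  · exact (Set.insert_eq_of_mem hB ▸ hblue).succ
  exact .inr (.inr ⟨s(x, y), by simpa using hxy, hR, hB, hred, hblue⟩)

theorem of_forced_blue {x y k : ℕ} {l : List ℕ} (hp : HasPathOn R x y l) (hk : l.length = k)
    (hk3 : 3 ≤ k) (h : BuilderWinsIn (cycleGraph k) H R (insert s(y, x) B) r) :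
    BuilderWinsIn (cycleGraph k) H R B (r + 1) := by
  subst hk
  have hne : y ≠ x := (hp.ne (by omega)).symm
  have hp' : HasPathOn (insert s(y, x) R) x y l := hp.mono (Set.subset_insert _ _)
  exact of_query hne
    (of_hasCopy_red (hp'.hasCopy_cycleGraph hk3 (adj_fromEdgeSet_insert hne))) h

theorem of_forced_red_left {x y u n : ℕ} {l : List ℕ} (hp : HasPathOn B x y l) (hu : u ∉ l)
    (hn : l.length + 1 = n) (h : BuilderWinsIn G (pathGraph n) (insert s(u, x) R) B r) :
    BuilderWinsIn G (pathGraph n) R B (r + 1) := by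
  subst hn
  exact of_query (ne_of_mem_of_not_mem hp.left_mem hu).symm h
    (of_hasCopy_blue (hp.insert_cons hu).hasCopy_pathGraph)

theorem of_forced_red_right {x y u n : ℕ} {l : List ℕ} (hp : HasPathOn B x y l) (hu : u ∉ l)
    (hn : l.length + 1 = n) (h : BuilderWinsIn G (pathGraph n) (insert s(u, y) R) B r) :
    BuilderWinsIn G (pathGraph n) R B (r + 1) :=
  of_forced_red_left hp.symm (mt List.mem_reverse.mp hu) (by simpa using hn) h

end AnyTargets

variable {R B : Set (Sym2 ℕ)} {b c x y n : ℕ} {l : List ℕ}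

theorem of_red_path_of_blue_path {k : ℕ} {m : List ℕ} (hred : HasPathOn R x y m)
    (hblue : HasPathOn B x y l) (hm : 2 ≤ m.length) (hk : m.length + 1 = k)
    (hn : l.length + 1 = n) : BuilderWinsIn (cycleGraph k) (pathGraph n) R B 2 := by
  obtain ⟨w, hw⟩ := Infinite.exists_notMem_finset (l ++ m).toFinset
  obtain ⟨hwl, hwm⟩ : w ∉ l ∧ w ∉ m := by simpa using hw
  have hwy : w ≠ y := (ne_of_mem_of_not_mem hred.right_mem hwm).symm
  refine of_forced_red_left hblue hwl hn (of_forced_red_right hblue hwl hn (of_hasCopy_red ?_))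
  subst hk
  exact ((hred.insert_cons hwm).mono (Set.subset_insert _ _)).hasCopy_cycleGraph (by simpa using hm)
    (adj_fromEdgeSet_insert hwy).symm

theorem of_blue_path (hp : HasPathOn B x y l) (hxy : x ≠ y) (hn : l.length + 1 = n) :
    BuilderWinsIn (cycleGraph 4) (pathGraph n) R B 4 := by
  obtain ⟨u, hu⟩ := Infinite.exists_notMem_finset l.toFinset
  rw [List.mem_toFinset] at hu
  have hux : u ≠ x := (ne_of_mem_of_not_mem hp.left_mem hu).symm
  have huy : u ≠ y := (ne_of_mem_of_not_mem hp.right_mem hu).symm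
  refine of_forced_red_left hp hu hn (of_forced_red_right hp hu hn ?_)
  have hred : HasPathOn (insert s(u, y) (insert s(u, x) R)) x y [x, u, y] :=
    .of_adj_of_adj (fromEdgeSet_mono (Set.subset_insert _ _) (adj_fromEdgeSet_insert hux))
      (adj_fromEdgeSet_insert huy) hxy
  exact of_red_path_of_blue_path hred hp (by simp) rfl hn

theorem of_red_claw (hp : HasPathOn B x y l) (hxy : x ≠ y) (hcl : c ∉ l)
    (hbx : (fromEdgeSet R).Adj b x) (hby : (fromEdgeSet R).Adj b y)
    (hbc : (fromEdgeSet R).Adj b c) (hn : l.length + 2 = n) :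
    BuilderWinsIn (cycleGraph 4) (pathGraph n) R B 4 := by
  have hxc : x ≠ c := ne_of_mem_of_not_mem hp.left_mem hcl
  have hyc : y ≠ c := ne_of_mem_of_not_mem hp.right_mem hcl
  refine of_query hyc.symm ?red ?blue
  case red =>
    have hred : HasPathOn (insert s(c, y) R) x c [x, b, y, c] :=
      (HasPathOn.of_adj_of_adj hbx hby hxy).insert_concat (by simp [hxc.symm, hbc.ne', hyc.symm])
    have hred' : HasPathOn (insert s(c, y) R) c y [c, b, y] :=
      (HasPathOn.of_adj_of_adj hbc hby hyc.symm).mono (Set.subset_insert _ _)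
    exact of_forced_blue hred rfl (by simp)
      (of_red_path_of_blue_path hred' (hp.insert_cons hcl) (by simp) rfl hn)
  case blue =>
    exact (of_red_path_of_blue_path (.of_adj_of_adj hbx hbc hxc) (hp.insert_concat hcl)
      (by simp) rfl (by simpa using hn)).succ

end BuilderWinsIn

theorem builder_wins_case_R4_general {R B : Set (Sym2 ℕ)} {a b c d f n : ℕ} {l : List ℕ}
    (hab : (fromEdgeSet R).Adj a b) (hbc : (fromEdgeSet R).Adj b c)
    (hcd : (fromEdgeSet R).Adj c d) (hac : a ≠ c) (hblue : HasPathOn B d f l)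
    (ha : a ∉ l) (hb : b ∉ l) (hc : c ∉ l) (hn : l.length + 3 = n) :
    BuilderWinsIn (cycleGraph 4) (pathGraph n) R B 6 := by
  have hbd : b ≠ d := (ne_of_mem_of_not_mem hblue.left_mem hb).symm
  have had : a ≠ d := (ne_of_mem_of_not_mem hblue.left_mem ha).symm
  have hbf : b ≠ f := (ne_of_mem_of_not_mem hblue.right_mem hb).symm
  have haf : a ≠ f := (ne_of_mem_of_not_mem hblue.right_mem ha).symm
  have hred : HasPathOn R d a [d, c, b, a] :=
    (HasPathOn.of_adj_of_adj hbc hab.symm hac.symm).cons hcd.symm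
      (by simp [hcd.ne', hbd.symm, had.symm])
  have hpath : HasPathOn (insert s(a, d) B) a f (a :: l) := hblue.insert_cons ha
  refine .of_forced_blue hred rfl (by simp) (.of_query hbf ?red ?blue)
  case red =>
    have hle := fromEdgeSet_mono (Set.subset_insert s(b, f) R)
    exact .of_red_claw hpath haf (by simp [hac.symm, hc]) (hle hab.symm)
      (adj_fromEdgeSet_insert hbf) (hle hbc) (by simpa using hn)
  case blue =>
    exact .of_blue_path (hpath.insert_concat (by simp [hab.ne', hb])) hab.ne (by simpa using hn)

/-- Case `R4`: in the online Ramsey game with targets red `C₄` and blue `P₆`,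
from the position in which the five edges `v₁v₂, v₂v₃, v₃v₄, v₄v₅, v₅v₆` of a path on
six distinct vertices have been colored red, red, red, blue, blue respectively,
Builder can force a red copy of `C₄` or a blue copy of `P₆` within at most 6 additional
rounds (so within at most 11 rounds in total). -/
theorem builder_wins_case_R4 (v : Fin 6 → ℕ) (hv : Function.Injective v) :
    BuilderWinsIn (cycleGraph 4) (pathGraph 6)
      {s(v 0, v 1), s(v 1, v 2), s(v 2, v 3)}
      {s(v 3, v 4), s(v 4, v 5)} 6 := by
  refine builder_wins_case_R4_general (a := v 0) (b := v 1) (c := v 2) (l := [v 3, v 4, v 5])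
    ?_ ?_ ?_ ?_ (.of_adj_of_adj ?_ ?_ ?_) ?_ ?_ ?_ rfl
  all_goals simp [hv.eq_iff]
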